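/- arXiv:2012.12034 — 3 statements merged into one kernel-verified Lean document; each statement's English description precedes it below -/
import Mathlib

section
/- Let T and S be bounded linear operators on H each admitting an A-adjoint. Then for each choice of sign, ω_A(TS) ≤ ‖T‖_A · ω_A(S) + (1/2) · ω_A(TS ± S T^{♯_A}). -/
noncomputable section

open ContinuousLinearMap

variable {H : Type*} [NormedAddCommGroup H] [InnerProductSpace ℂ H] [CompleteSpace H]

/-- The semi-inner product induced by the positive operator `A`: `⟨x, y⟩_A := ⟨A x, y⟩`. -/
def innA (A : H →L[ℂ] H) (x y : H) : ℂ := inner ℂ (A x) y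

/-- The seminorm induced by `A`: `‖x‖_A := ⟨x, x⟩_A ^ (1/2)`. -/
def vnormA (A : H →L[ℂ] H) (x : H) : ℝ := Real.sqrt (innA A x x).re

/-- The `A`-operator seminorm: `‖T‖_A := sup {‖T x‖_A : ‖x‖_A = 1}`. -/
def opNormA (A T : H →L[ℂ] H) : ℝ :=
  sSup {c : ℝ | ∃ x : H, vnormA A x = 1 ∧ c = vnormA A (T x)}

/-- The `A`-numerical radius: `ω_A(T) := sup {|⟨T x, x⟩_A| : ‖x‖_A = 1}`. -/
def wA (A T : H →L[ℂ] H) : ℝ :=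
  sSup {c : ℝ | ∃ x : H, vnormA A x = 1 ∧ c = ‖innA A (T x) x‖}

/-- `T` admits an `A`-adjoint: there is a bounded operator `X` with `A X = T* A`. -/
def HasAAdjoint (A T : H →L[ℂ] H) : Prop :=
  ∃ X : H →L[ℂ] H, A ∘L X = adjoint T ∘L A

/-- `X` is the reduced `A`-adjoint `T^{♯_A}` of `T`: it solves `A X = T* A` and its range
is contained in the closure of the range of `A`. -/
def IsReducedAAdjoint (A T X : H →L[ℂ] H) : Prop :=
  (A ∘L X = adjoint T ∘L A) ∧ ∀ y : H, X y ∈ closure (Set.range A)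

/-!
Since `⟨T S x, x⟩_A = ⟨S x, X x⟩_A` for an `A`-adjoint `X` of `T`, the identity
`2 a = (a - σ̄ b) + (a + σ̄ b)` with `a = ⟨S x, X x⟩_A` and `b = ⟨S X x, x⟩_A` splits
`⟨T S x, x⟩_A` into half of `⟨(T S + σ S X) x, x⟩_A` and a remainder of modulus at most
`(|a| + |b|) / 2` whenever `|σ| ≤ 1`. Polarization bounds `|⟨S x, y⟩_A| + |⟨S y, x⟩_A|` by
`2 ω_A(S) ‖x‖_A ‖y‖_A`, and `‖X x‖_A ≤ ‖T‖_A ‖x‖_A`.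

The suprema are finite because an operator with an `A`-adjoint is bounded for `‖·‖_A`: the
relation `A X = T* A` gives `(T* A T)² ≤ ‖T‖² ‖X‖² A²`, and the square root is operator monotone.
-/

section CStarAlgebra

variable {R : Type*} [NonUnitalCStarAlgebra R] [PartialOrder R] [StarOrderedRing R]

lemma star_mul_mul_le_smul_of_mul_eq_star_mul {a t x : R} (ha : 0 ≤ a)
    (h : a * x = star t * a) : star t * a * t ≤ (‖t‖ * ‖x‖) • a := by
  have ha' : star a = a := (IsSelfAdjoint.of_nonneg ha).star_eq
  have h' : star x * a = a * t := by simpa [ha'] using congrArg star h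
  have hsq : (star t * a * t) * (star t * a * t)
      ≤ ((‖t‖ * ‖x‖) • a) * ((‖t‖ * ‖x‖) • a) := calc
    (star t * a * t) * (star t * a * t) = star (a * t) * (t * star t) * (a * t) := by
      simp only [star_mul, ha', mul_assoc]
    _ ≤ ‖t * star t‖ • (star (a * t) * (a * t)) :=
      CStarAlgebra.star_left_conjugate_le_norm_smul (.mul_star_self t)
    _ = ‖t * star t‖ • (star a * (x * star x) * a) := by
      rw [← h', star_mul, star_star]
      simp only [mul_assoc]
    _ ≤ ‖t * star t‖ • ‖x * star x‖ • (star a * a) := by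
      gcongr
      exact CStarAlgebra.star_left_conjugate_le_norm_smul (.mul_star_self x)
    _ = ((‖t‖ * ‖x‖) • a) * ((‖t‖ * ‖x‖) • a) := by
      rw [ha', CStarRing.norm_self_mul_star, CStarRing.norm_self_mul_star, smul_mul_smul_comm,
        smul_smul, mul_mul_mul_comm]
  have hsqrt := CFC.sqrt_le_sqrt _ _ hsq
  rwa [CFC.sqrt_mul_self _ (star_left_conjugate_nonneg ha t),
    CFC.sqrt_mul_self _ (smul_nonneg (by positivity) ha)] at hsqrt

end CStarAlgebra

lemma exists_norm_mul_add_conj_mul_eq_norm_add_norm (a b : ℂ) :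
    ∃ c : ℂ, ‖c‖ = 1 ∧ ‖c * a + starRingEnd ℂ c * b‖ = ‖a‖ + ‖b‖ := by
  set θ : ℝ := (b.arg - a.arg) / 2 with hθ
  refine ⟨Complex.exp (θ * Complex.I), Complex.norm_exp_ofReal_mul_I θ, ?_⟩
  have hsum : Complex.exp (θ * Complex.I) * a + starRingEnd ℂ (Complex.exp (θ * Complex.I)) * b
      = ((‖a‖ + ‖b‖ : ℝ) : ℂ) * Complex.exp (((a.arg + b.arg) / 2 : ℝ) * Complex.I) := by
    conv_lhs => rw [← Complex.norm_mul_exp_arg_mul_I a, ← Complex.norm_mul_exp_arg_mul_I b]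
    rw [← Complex.exp_conj, mul_left_comm, mul_left_comm (Complex.exp _), ← Complex.exp_add,
      ← Complex.exp_add, Complex.ofReal_add, add_mul]
    simp only [hθ, map_mul, Complex.conj_ofReal, Complex.conj_I]
    push_cast
    ring_nf
  rw [hsum, norm_mul, Complex.norm_exp_ofReal_mul_I, mul_one, Complex.norm_real,
    Real.norm_of_nonneg (by positivity)]

section SesquilinearForm

variable {E F : Type*} [AddCommGroup E] [Module ℂ E] [SeminormedAddCommGroup F]
  [InnerProductSpace ℂ F] {f : E →ₗ⋆[ℂ] E →ₗ[ℂ] ℂ} {B : E →ₗ[ℂ] F} {w : ℝ}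

lemma norm_apply_add_apply_swap_le (hf : ∀ z, ‖f z z‖ ≤ w * ‖B z‖ ^ 2) (x y : E) :
    ‖f x y + f y x‖ ≤ w * (‖B x‖ ^ 2 + ‖B y‖ ^ 2) := by
  have hpol : f (x + y) (x + y) - f (x - y) (x - y) = 2 * (f x y + f y x) := by
    simp only [map_add, map_sub, LinearMap.add_apply, LinearMap.sub_apply]
    ring
  have hpar := parallelogram_law_with_norm ℂ (B x) (B y)
  have hnorm : 2 * ‖f x y + f y x‖ ≤ 2 * (w * (‖B x‖ ^ 2 + ‖B y‖ ^ 2)) := calc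
    2 * ‖f x y + f y x‖ = ‖f (x + y) (x + y) - f (x - y) (x - y)‖ := by
      rw [hpol, norm_mul, Complex.norm_ofNat]
    _ ≤ w * ‖B (x + y)‖ ^ 2 + w * ‖B (x - y)‖ ^ 2 := norm_sub_le_of_le (hf _) (hf _)
    _ = 2 * (w * (‖B x‖ ^ 2 + ‖B y‖ ^ 2)) := by
      rw [map_add, map_sub]
      linear_combination w * hpar
  linarith

lemma norm_apply_add_norm_apply_swap_le_add_sq (hf : ∀ z, ‖f z z‖ ≤ w * ‖B z‖ ^ 2) (x y : E) :
    ‖f x y‖ + ‖f y x‖ ≤ w * (‖B x‖ ^ 2 + ‖B y‖ ^ 2) := by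
  obtain ⟨c, hc, hsum⟩ := exists_norm_mul_add_conj_mul_eq_norm_add_norm (f x y) (f y x)
  have h := norm_apply_add_apply_swap_le hf x (c • y)
  simpa only [map_smul, LinearMap.map_smulₛₗ, LinearMap.smul_apply, smul_eq_mul, hsum,
    norm_smul, hc, one_mul] using h

lemma norm_apply_add_norm_apply_swap_le (hw : 0 ≤ w) (hf : ∀ z, ‖f z z‖ ≤ w * ‖B z‖ ^ 2)
    (x y : E) : ‖f x y‖ + ‖f y x‖ ≤ 2 * w * (‖B x‖ * ‖B y‖) := by
  set N := ‖f x y‖ + ‖f y x‖ with hN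
  -- Replacing `x` by `t • x` makes the sum-of-squares bound a nonnegative quadratic in `t`.
  have hquad (t : ℝ) : 0 ≤ w * ‖B x‖ ^ 2 * (t * t) + -N * t + w * ‖B y‖ ^ 2 := by
    have h := norm_apply_add_norm_apply_swap_le_add_sq hf ((t : ℂ) • x) y
    simp only [map_smul, LinearMap.map_smulₛₗ, LinearMap.smul_apply, smul_eq_mul, norm_smul,
      norm_mul, RCLike.norm_conj, Complex.norm_real, Real.norm_eq_abs, mul_pow, sq_abs,
      ← mul_add, ← hN] at h
    have ht : t * N ≤ |t| * N := by gcongr; exact le_abs_self t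
    linarith
  have hdiscrim := discrim_le_zero hquad
  refine (abs_le_of_sq_le_sq' ?_ (by positivity)).2
  rw [discrim] at hdiscrim
  linarith

end SesquilinearForm

section Seminorm

variable {A : H →L[ℂ] H}

lemma innA_eq_inner_sqrt (hA : A.IsPositive) (x y : H) :
    innA A x y = inner ℂ (CFC.sqrt A x) (CFC.sqrt A y) := by
  have hsqrt : (CFC.sqrt A).IsPositive := (nonneg_iff_isPositive _).1 (CFC.sqrt_nonneg A)
  have hmul := CFC.sqrt_mul_sqrt_self A ((nonneg_iff_isPositive A).2 hA)
  rw [← hsqrt.isSymmetric.apply_clm, innA, ← mul_apply_eq_comp, hmul]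

lemma vnormA_eq_norm_sqrt (hA : A.IsPositive) (x : H) : vnormA A x = ‖CFC.sqrt A x‖ := by
  rw [vnormA, innA_eq_inner_sqrt hA, norm_eq_sqrt_re_inner (𝕜 := ℂ)]
  rfl

omit [CompleteSpace H] in
lemma vnormA_nonneg (A : H →L[ℂ] H) (x : H) : 0 ≤ vnormA A x := Real.sqrt_nonneg _

lemma innA_self_eq_vnormA_sq (hA : A.IsPositive) (x : H) :
    innA A x x = ((vnormA A x ^ 2 : ℝ) : ℂ) := by
  rw [innA_eq_inner_sqrt hA, vnormA_eq_norm_sqrt hA, inner_self_eq_norm_sq_to_K]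
  norm_cast

lemma vnormA_add_le (hA : A.IsPositive) (x y : H) :
    vnormA A (x + y) ≤ vnormA A x + vnormA A y := by
  simpa only [vnormA_eq_norm_sqrt hA, map_add] using norm_add_le _ _

lemma vnormA_smul (hA : A.IsPositive) (c : ℂ) (x : H) :
    vnormA A (c • x) = ‖c‖ * vnormA A x := by
  simp only [vnormA_eq_norm_sqrt hA, map_smul, norm_smul]

lemma norm_innA_le (hA : A.IsPositive) (x y : H) : ‖innA A x y‖ ≤ vnormA A x * vnormA A y := by
  simpa only [innA_eq_inner_sqrt hA, vnormA_eq_norm_sqrt hA] using norm_inner_le_norm _ _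

lemma exists_vnormA_eq_one_and_eq_smul (hA : A.IsPositive) {z : H} (hz : vnormA A z ≠ 0) :
    ∃ u : H, vnormA A u = 1 ∧ z = (vnormA A z : ℂ) • u := by
  refine ⟨(vnormA A z : ℂ)⁻¹ • z, ?_, ?_⟩
  · rw [vnormA_smul hA, norm_inv, Complex.norm_real, Real.norm_of_nonneg (vnormA_nonneg A z),
      inv_mul_cancel₀ hz]
  · rw [smul_inv_smul₀ (Complex.ofReal_ne_zero.2 hz)]

end Seminorm

/-- `T` is `A`-bounded: it is bounded for the seminorm `‖·‖_A`. For positive `A`, this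
makes the suprema defining `‖T‖_A` and `ω_A(T)` finite, so that neither is a junk value. -/
def IsABounded (A T : H →L[ℂ] H) : Prop :=
  ∃ C : NNReal, ∀ x, vnormA A (T x) ≤ C * vnormA A x

namespace IsABounded

variable {A T S : H →L[ℂ] H}

omit [CompleteSpace H] in
lemma mul (hT : IsABounded A T) (hS : IsABounded A S) : IsABounded A (T * S) := by
  obtain ⟨C, hC⟩ := hT
  obtain ⟨D, hD⟩ := hS
  refine ⟨C * D, fun x => ?_⟩
  calc vnormA A (T (S x)) ≤ C * vnormA A (S x) := hC _
    _ ≤ C * (D * vnormA A x) := by gcongr; exact hD x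
    _ = (C * D : NNReal) * vnormA A x := by rw [NNReal.coe_mul, mul_assoc]

lemma add (hA : A.IsPositive) (hT : IsABounded A T) (hS : IsABounded A S) :
    IsABounded A (T + S) := by
  obtain ⟨C, hC⟩ := hT
  obtain ⟨D, hD⟩ := hS
  refine ⟨C + D, fun x => (vnormA_add_le hA _ _).trans ?_⟩
  rw [NNReal.coe_add, add_mul]
  exact add_le_add (hC x) (hD x)

lemma smul (hA : A.IsPositive) (c : ℂ) (hT : IsABounded A T) : IsABounded A (c • T) := by
  obtain ⟨C, hC⟩ := hT
  refine ⟨‖c‖₊ * C, fun x => ?_⟩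
  rw [smul_apply, vnormA_smul hA, NNReal.coe_mul, coe_nnnorm, mul_assoc]
  gcongr
  exact hC x

lemma of_star_mul_mul_le_smul (hA : A.IsPositive) {c : ℝ} (h : star T * A * T ≤ c • A) :
    IsABounded A T := by
  refine ⟨⟨√c, Real.sqrt_nonneg _⟩, fun x => ?_⟩
  have hsq : vnormA A (T x) ^ 2 ≤ c * vnormA A x ^ 2 := by
    have hpos := ((le_def _ _).1 h).re_inner_nonneg_left x
    have hTx : inner ℂ ((star T * A * T) x) x = innA A (T x) (T x) := adjoint_inner_left T x _
    have hcx : inner ℂ ((c • A) x) x = (c : ℂ) * innA A x x := by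
      rw [innA, smul_apply, inner_smul_left_eq_smul, Complex.real_smul]
    rw [sub_apply, inner_sub_left, hTx, hcx, innA_self_eq_vnormA_sq hA,
      innA_self_eq_vnormA_sq hA, ← Complex.ofReal_mul, ← Complex.ofReal_sub] at hpos
    exact sub_nonneg.1 hpos
  calc vnormA A (T x) ≤ √(c * vnormA A x ^ 2) := Real.le_sqrt_of_sq_le hsq
    _ = √c * vnormA A x := by
      rw [Real.sqrt_mul' _ (sq_nonneg _), Real.sqrt_sq (vnormA_nonneg A x)]

end IsABounded

section Suprema

variable {A T S : H →L[ℂ] H}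

omit [CompleteSpace H] in
lemma opNormA_nonneg (A T : H →L[ℂ] H) : 0 ≤ opNormA A T :=
  Real.sSup_nonneg fun _ ⟨_, _, hc⟩ => hc ▸ vnormA_nonneg A _

omit [CompleteSpace H] in
lemma wA_nonneg (A T : H →L[ℂ] H) : 0 ≤ wA A T :=
  Real.sSup_nonneg fun _ ⟨_, _, hc⟩ => hc ▸ norm_nonneg _

omit [CompleteSpace H] in
lemma wA_le {c : ℝ} (hc : 0 ≤ c) (h : ∀ x, vnormA A x = 1 → ‖innA A (T x) x‖ ≤ c) :
    wA A T ≤ c :=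
  Real.sSup_le (fun _ ⟨x, hx, hr⟩ => hr ▸ h x hx) hc

lemma vnormA_apply_le_opNormA_mul (hA : A.IsPositive) (hT : IsABounded A T) (z : H) :
    vnormA A (T z) ≤ opNormA A T * vnormA A z := by
  obtain ⟨C, hC⟩ := hT
  rcases eq_or_ne (vnormA A z) 0 with hz | hz
  · simpa only [hz, mul_zero] using hC z
  obtain ⟨u, hu, hzu⟩ := exists_vnormA_eq_one_and_eq_smul hA hz
  have hTu : vnormA A (T u) ≤ opNormA A T := by
    refine le_csSup ⟨C, ?_⟩ ⟨u, hu, rfl⟩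
    rintro _ ⟨x, hx, rfl⟩
    simpa only [hx, mul_one] using hC x
  calc vnormA A (T z) = vnormA A z * vnormA A (T u) := by
        conv_lhs => rw [hzu, map_smul, vnormA_smul hA, Complex.norm_real,
          Real.norm_of_nonneg (vnormA_nonneg A z)]
    _ ≤ vnormA A z * opNormA A T := mul_le_mul_of_nonneg_left hTu (vnormA_nonneg A z)
    _ = opNormA A T * vnormA A z := mul_comm _ _

lemma norm_innA_apply_self_le_wA_mul (hA : A.IsPositive) (hT : IsABounded A T) (z : H) :
    ‖innA A (T z) z‖ ≤ wA A T * vnormA A z ^ 2 := by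
  rcases eq_or_ne (vnormA A z) 0 with hz | hz
  · simpa only [hz, mul_zero, zero_pow two_ne_zero] using norm_innA_le hA (T z) z
  obtain ⟨C, hC⟩ := hT
  obtain ⟨u, hu, hzu⟩ := exists_vnormA_eq_one_and_eq_smul hA hz
  have hTu : ‖innA A (T u) u‖ ≤ wA A T := by
    refine le_csSup ⟨C, ?_⟩ ⟨u, hu, rfl⟩
    rintro _ ⟨x, hx, rfl⟩
    simpa only [hx, mul_one] using (norm_innA_le hA (T x) x).trans
      (mul_le_mul_of_nonneg_right (hC x) (vnormA_nonneg A x))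
  calc ‖innA A (T z) z‖ = vnormA A z ^ 2 * ‖innA A (T u) u‖ := by
        conv_lhs => rw [hzu]
        simp only [innA, map_smul, inner_smul_left, inner_smul_right, norm_mul, RCLike.norm_conj,
          Complex.norm_real, Real.norm_of_nonneg (vnormA_nonneg A z)]
        ring
    _ ≤ vnormA A z ^ 2 * wA A T := by gcongr
    _ = wA A T * vnormA A z ^ 2 := mul_comm _ _

lemma norm_innA_apply_add_norm_innA_apply_swap_le (hA : A.IsPositive) (hS : IsABounded A S)
    (x y : H) :
    ‖innA A (S x) y‖ + ‖innA A (S y) x‖ ≤ 2 * wA A S * (vnormA A x * vnormA A y) := by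
  have hquad (z : H) : ‖innA A (S z) z‖ ≤ wA A S * ‖CFC.sqrt A z‖ ^ 2 := by
    simpa only [vnormA_eq_norm_sqrt hA] using norm_innA_apply_self_le_wA_mul hA hS z
  rw [vnormA_eq_norm_sqrt hA, vnormA_eq_norm_sqrt hA]
  exact norm_apply_add_norm_apply_swap_le (f := (innerₛₗ ℂ).comp (A ∘L S).toLinearMap)
    (B := (CFC.sqrt A).toLinearMap) (wA_nonneg A S) hquad x y

end Suprema

/-- `X` is an `A`-adjoint of `T`: it solves `A X = T* A`. Unlike in `IsReducedAAdjoint`, the range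
of `X` is not restricted, so `X` need not be determined by `T`. -/
def IsAAdjoint (A T X : H →L[ℂ] H) : Prop := A ∘L X = adjoint T ∘L A

namespace IsAAdjoint

variable {A T X : H →L[ℂ] H}

lemma symm (hA : A.IsPositive) (h : IsAAdjoint A T X) : IsAAdjoint A X T := by
  have hA' : adjoint A = A := hA.isSelfAdjoint.adjoint_eq
  have h' := congrArg adjoint h
  rw [adjoint_comp, adjoint_comp, adjoint_adjoint, hA'] at h'
  exact h'.symm

lemma innA_left (h : IsAAdjoint A T X) (x y : H) : innA A (X x) y = innA A x (T y) := by
  rw [innA, innA, ← adjoint_inner_left, ← comp_apply, h, comp_apply]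

lemma isABounded (hA : A.IsPositive) (h : IsAAdjoint A T X) : IsABounded A T :=
  .of_star_mul_mul_le_smul hA
    (star_mul_mul_le_smul_of_mul_eq_star_mul ((nonneg_iff_isPositive A).2 hA) h)

lemma vnormA_apply_le (hA : A.IsPositive) (h : IsAAdjoint A T X) (x : H) :
    vnormA A (X x) ≤ opNormA A T * vnormA A x := by
  rcases (vnormA_nonneg A (X x)).eq_or_lt with hX | hX
  · rw [← hX]
    exact mul_nonneg (opNormA_nonneg A T) (vnormA_nonneg A x)
  refine le_of_mul_le_mul_right ?_ hX
  calc vnormA A (X x) * vnormA A (X x) = ‖innA A x (T (X x))‖ := by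
        rw [← h.innA_left, innA_self_eq_vnormA_sq hA, Complex.norm_real,
          Real.norm_of_nonneg (sq_nonneg _), sq]
    _ ≤ vnormA A x * vnormA A (T (X x)) := norm_innA_le hA _ _
    _ ≤ vnormA A x * (opNormA A T * vnormA A (X x)) := by
        gcongr
        · exact vnormA_nonneg A x
        · exact vnormA_apply_le_opNormA_mul hA (h.isABounded hA) (X x)
    _ = opNormA A T * vnormA A x * vnormA A (X x) := by ring

end IsAAdjoint

lemma norm_innA_sub_mul_innA_le {A T S X : H →L[ℂ] H} (hA : A.IsPositive)
    (hX : IsAAdjoint A T X) (hS : IsABounded A S) {c : ℂ} (hc : ‖c‖ ≤ 1) {x : H}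
    (hx : vnormA A x = 1) :
    ‖innA A (S x) (X x) - c * innA A (S (X x)) x‖ ≤ 2 * (opNormA A T * wA A S) := calc
  ‖innA A (S x) (X x) - c * innA A (S (X x)) x‖
    ≤ ‖innA A (S x) (X x)‖ + ‖c‖ * ‖innA A (S (X x)) x‖ := by
      rw [← norm_mul]
      exact norm_sub_le _ _
  _ ≤ ‖innA A (S x) (X x)‖ + ‖innA A (S (X x)) x‖ := by
      gcongr
      exact mul_le_of_le_one_left (norm_nonneg _) hc
  _ ≤ 2 * wA A S * vnormA A (X x) := by
      simpa only [hx, one_mul] using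
        norm_innA_apply_add_norm_innA_apply_swap_le hA hS x (X x)
  _ ≤ 2 * wA A S * opNormA A T := by
      have hwS := wA_nonneg A S
      gcongr
      simpa only [hx, mul_one] using hX.vnormA_apply_le hA x
  _ = 2 * (opNormA A T * wA A S) := by ring

theorem stmt0_general {A T S X : H →L[ℂ] H} (hA : A.IsPositive) (hX : IsAAdjoint A T X)
    (hS : IsABounded A S) {σ : ℂ} (hσ : ‖σ‖ ≤ 1) :
    wA A (T * S) ≤ opNormA A T * wA A S + (1 / 2) * wA A (T * S + σ • (S * X)) := by
  have hbdd : IsABounded A (T * S + σ • (S * X)) :=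
    ((hX.isABounded hA).mul hS).add hA
      ((hS.mul ((hX.symm hA).isABounded hA)).smul hA σ)
  have hopNorm := opNormA_nonneg A T
  have hwS := wA_nonneg A S
  have hwSum := wA_nonneg A (T * S + σ • (S * X))
  refine wA_le (by positivity) fun x hx => ?_
  set a := innA A (S x) (X x)
  set b := innA A (S (X x)) x
  have hTS : innA A ((T * S) x) x = a := (hX.symm hA).innA_left (S x) x
  have hsub : ‖a - starRingEnd ℂ σ * b‖ ≤ 2 * (opNormA A T * wA A S) :=
    norm_innA_sub_mul_innA_le hA hX hS (by rwa [RCLike.norm_conj]) hx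
  have hadd : ‖a + starRingEnd ℂ σ * b‖ ≤ wA A (T * S + σ • (S * X)) := by
    have h := norm_innA_apply_self_le_wA_mul hA hbdd x
    rw [hx, one_pow, mul_one] at h
    refine le_of_eq_of_le (congrArg norm ?_) h
    rw [← hTS]
    simp only [b, innA, add_apply, smul_apply, mul_apply_eq_comp, map_add, map_smul,
      inner_add_left, inner_smul_left]
  have htri := norm_add_le_of_le hsub hadd
  rw [sub_add_add_cancel, ← two_mul, norm_mul, Complex.norm_ofNat] at htri
  rw [hTS]
  linarith

theorem stmt0 (A : H →L[ℂ] H) (hA : A.IsPositive) (hA0 : A ≠ 0)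
    (T S Tsharp : H →L[ℂ] H)
    (hT : IsReducedAAdjoint A T Tsharp) (hS : HasAAdjoint A S)
    (σ : ℂ) (hσ : σ = 1 ∨ σ = -1) :
    wA A (T * S) ≤ opNormA A T * wA A S + (1 / 2) * wA A (T * S + σ • (S * Tsharp)) :=
  stmt0_general hA hT.1 (hS.elim fun _ hX => IsAAdjoint.isABounded hA hX)
    (by rcases hσ with rfl | rfl <;> simp)
end
end

section
/- For all vectors x, y, z ∈ H, one has |⟨x,y⟩_A|² + |⟨x,z⟩_A|² ≤ ‖x‖_A² · ( max{‖y‖_A², ‖z‖_A²} + |⟨y,z⟩_A| ). -/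
noncomputable section

open ContinuousLinearMap

variable {H : Type*} [NormedAddCommGroup H] [InnerProductSpace ℂ H] [CompleteSpace H]

/-!
The inequality is the case of two vectors of Bombieri's inequality
`∑ i, ‖⟪u, v i⟫‖ ^ 2 ≤ ‖u‖ ^ 2 * max i, ∑ j, ‖⟪v i, v j⟫‖`,
which holds for every semi-inner product, in particular for `⟪A x, y⟫` with `A` positive.
The sum `S` on the left is `⟪u, w⟫` for `w = ∑ i, ⟪v i, u⟫ • v i`, so `S ^ 2 ≤ ‖u‖ ^ 2 * ‖w‖ ^ 2`
by Cauchy-Schwarz. Expanding `‖w‖ ^ 2` and applying `2 * p * q ≤ p ^ 2 + q ^ 2` to each product of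
two coefficients bounds it by `S` times the largest row sum on the right; cancel `S`.
-/

section Bombieri

variable {ι 𝕜 E : Type*} [RCLike 𝕜] [SeminormedAddCommGroup E] [InnerProductSpace 𝕜 E]

theorem sum_sum_mul_mul_le_sum_sq_mul_sum (s : Finset ι) (c : ι → ℝ) {g : ι → ι → ℝ}
    (hg_nonneg : ∀ i j, 0 ≤ g i j) (hg_symm : ∀ i j, g i j = g j i) :
    ∑ i ∈ s, ∑ j ∈ s, c i * c j * g i j ≤ ∑ i ∈ s, c i ^ 2 * ∑ j ∈ s, g i j := by
  have amgm (i j : ι) : c i * c j * g i j ≤ (c i ^ 2 * g i j + c j ^ 2 * g i j) / 2 := by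
    linarith [mul_nonneg (sq_nonneg (c i - c j)) (hg_nonneg i j)]
  have swap : ∑ i ∈ s, ∑ j ∈ s, c j ^ 2 * g i j = ∑ i ∈ s, ∑ j ∈ s, c i ^ 2 * g i j := by
    rw [Finset.sum_comm]
    simp only [hg_symm]
  calc ∑ i ∈ s, ∑ j ∈ s, c i * c j * g i j
      ≤ ∑ i ∈ s, ∑ j ∈ s, (c i ^ 2 * g i j + c j ^ 2 * g i j) / 2 := by
        gcongr with i _ j _
        exact amgm i j
    _ = ∑ i ∈ s, ∑ j ∈ s, c i ^ 2 * g i j := by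
        simp only [← Finset.sum_div, Finset.sum_add_distrib, swap, add_self_div_two]
    _ = ∑ i ∈ s, c i ^ 2 * ∑ j ∈ s, g i j := by simp only [Finset.mul_sum]

theorem norm_sum_smul_sq_le (s : Finset ι) (a : ι → 𝕜) (v : ι → E) :
    ‖∑ i ∈ s, a i • v i‖ ^ 2 ≤ ∑ i ∈ s, ‖a i‖ ^ 2 * ∑ j ∈ s, ‖inner 𝕜 (v i) (v j)‖ := by
  calc ‖∑ i ∈ s, a i • v i‖ ^ 2
      = ‖∑ i ∈ s, ∑ j ∈ s, inner 𝕜 (a i • v i) (a j • v j)‖ := by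
        simp only [← inner_sum, ← sum_inner, inner_self_eq_norm_sq_to_K, norm_pow,
          RCLike.norm_ofReal, abs_norm]
    _ ≤ ∑ i ∈ s, ∑ j ∈ s, ‖inner 𝕜 (a i • v i) (a j • v j)‖ :=
        (norm_sum_le _ _).trans (Finset.sum_le_sum fun _ _ ↦ norm_sum_le _ _)
    _ = ∑ i ∈ s, ∑ j ∈ s, ‖a i‖ * ‖a j‖ * ‖inner 𝕜 (v i) (v j)‖ := by
        simp only [inner_smul_left, inner_smul_right, norm_mul, RCLike.norm_conj, mul_assoc,
          mul_left_comm]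
    _ ≤ ∑ i ∈ s, ‖a i‖ ^ 2 * ∑ j ∈ s, ‖inner 𝕜 (v i) (v j)‖ :=
        sum_sum_mul_mul_le_sum_sq_mul_sum s _ (fun _ _ ↦ norm_nonneg _)
          fun _ _ ↦ norm_inner_symm _ _

theorem inner_sum_inner_smul_right (s : Finset ι) (u : E) (v : ι → E) :
    inner 𝕜 u (∑ i ∈ s, inner 𝕜 (v i) u • v i) =
      ((∑ i ∈ s, ‖inner 𝕜 u (v i)‖ ^ 2 : ℝ) : 𝕜) := by
  simp only [inner_sum, inner_smul_right, ← inner_conj_symm _ u, RCLike.conj_mul,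
    RCLike.ofReal_sum, RCLike.ofReal_pow]

theorem sum_norm_inner_sq_le_of_sum_norm_inner_le {s : Finset ι} {v : ι → E} {M : ℝ}
    (hM : 0 ≤ M) (hv : ∀ i ∈ s, ∑ j ∈ s, ‖inner 𝕜 (v i) (v j)‖ ≤ M) (u : E) :
    ∑ i ∈ s, ‖inner 𝕜 u (v i)‖ ^ 2 ≤ ‖u‖ ^ 2 * M := by
  set S := ∑ i ∈ s, ‖inner 𝕜 u (v i)‖ ^ 2 with hS
  set w := ∑ i ∈ s, inner 𝕜 (v i) u • v i with hw
  have hS_nonneg : 0 ≤ S := by positivity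
  have hS_le : S ≤ ‖u‖ * ‖w‖ := by
    have cauchy_schwarz := norm_inner_le_norm (𝕜 := 𝕜) u w
    rwa [hw, inner_sum_inner_smul_right, RCLike.norm_of_nonneg hS_nonneg] at cauchy_schwarz
  have hw_le : ‖w‖ ^ 2 ≤ S * M :=
    calc ‖w‖ ^ 2 ≤ ∑ i ∈ s, ‖inner 𝕜 (v i) u‖ ^ 2 * ∑ j ∈ s, ‖inner 𝕜 (v i) (v j)‖ :=
          norm_sum_smul_sq_le s _ v
      _ ≤ ∑ i ∈ s, ‖inner 𝕜 (v i) u‖ ^ 2 * M := by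
          gcongr with i hi
          exact hv i hi
      _ = S * M := by simp only [hS, Finset.sum_mul, norm_inner_symm u]
  have hS_sq_le : S * S ≤ S * (‖u‖ ^ 2 * M) :=
    calc S * S ≤ (‖u‖ * ‖w‖) * (‖u‖ * ‖w‖) := by gcongr
      _ = ‖u‖ ^ 2 * ‖w‖ ^ 2 := by ring
      _ ≤ ‖u‖ ^ 2 * (S * M) := by gcongr
      _ = S * (‖u‖ ^ 2 * M) := by ring
  rcases hS_nonneg.eq_or_lt with hS_zero | hS_pos
  · rw [← hS_zero]
    positivity
  · exact le_of_mul_le_mul_left hS_sq_le hS_pos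

theorem norm_inner_sq_add_norm_inner_sq_le (x y z : E) :
    ‖inner 𝕜 x y‖ ^ 2 + ‖inner 𝕜 x z‖ ^ 2 ≤
      ‖x‖ ^ 2 * (max (‖y‖ ^ 2) (‖z‖ ^ 2) + ‖inner 𝕜 y z‖) := by
  have gram_row_le : ∀ i ∈ Finset.univ, ∑ j, ‖inner 𝕜 (![y, z] i) (![y, z] j)‖ ≤
      max (‖y‖ ^ 2) (‖z‖ ^ 2) + ‖inner 𝕜 y z‖ := by
    simp [Fin.forall_fin_two, Fin.sum_univ_two, norm_inner_symm z y,
      inner_self_eq_norm_sq_to_K, add_comm]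
  simpa [Fin.sum_univ_two] using
    sum_norm_inner_sq_le_of_sum_norm_inner_le (by positivity) gram_row_le x

end Bombieri

section PosSemidef

open scoped ComplexOrder

variable {𝕜 : Type*} [RCLike 𝕜]

/-- The semi-inner product space structure on `V` given by a positive semidefinite form, which makes
the results on inner products available for such forms. -/
abbrev preInnerCoreOfIsPosSemidef {V : Type*} [AddCommGroup V] [Module 𝕜 V]
    {B : V →ₗ⋆[𝕜] V →ₗ[𝕜] 𝕜} (hB : B.IsPosSemidef) : PreInnerProductSpace.Core 𝕜 V where
  inner x y := B x y
  conj_inner_symm x y := hB.isSymm.eq y x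
  re_inner_nonneg x := (RCLike.nonneg_iff.1 (hB.isNonneg.nonneg x)).1
  add_left x y z := by simp
  smul_left x y r := by simp

theorem stmt6_general {V : Type*} [AddCommGroup V] [Module 𝕜 V]
    {B : V →ₗ⋆[𝕜] V →ₗ[𝕜] 𝕜} (hB : B.IsPosSemidef) (x y z : V) :
    ‖B x y‖ ^ 2 + ‖B x z‖ ^ 2 ≤
      RCLike.re (B x x) * (max (RCLike.re (B y y)) (RCLike.re (B z z)) + ‖B y z‖) := by
  let core := preInnerCoreOfIsPosSemidef hB
  let : SeminormedAddCommGroup V := InnerProductSpace.Core.toSeminormedAddCommGroup (𝕜 := 𝕜)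
  let : InnerProductSpace 𝕜 V := InnerProductSpace.ofCore core
  have norm_sq (v : V) : ‖v‖ ^ 2 = RCLike.re (B v v) := norm_sq_eq_re_inner (𝕜 := 𝕜) v
  simp only [← norm_sq]
  exact norm_inner_sq_add_norm_inner_sq_le (𝕜 := 𝕜) x y z

theorem isPosSemidef_innerₛₗ_comp {E : Type*} [NormedAddCommGroup E] [InnerProductSpace 𝕜 E]
    {T : E →ₗ[𝕜] E} (hT : T.IsPositive) : ((innerₛₗ 𝕜).comp T).IsPosSemidef where
  eq x y := by simp [hT.isSymmetric y x]
  nonneg x := hT.inner_nonneg_left x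

end PosSemidef

theorem sq_vnormA {E : Type*} [NormedAddCommGroup E] [InnerProductSpace ℂ E]
    {A : E →L[ℂ] E} (hA : A.IsPositive) (x : E) : vnormA A x ^ 2 = (innA A x x).re :=
  Real.sq_sqrt (hA.re_inner_nonneg_left x)

theorem stmt6 (A : H →L[ℂ] H) (hA : A.IsPositive) (hA0 : A ≠ 0) (x y z : H) :
    ‖innA A x y‖ ^ 2 + ‖innA A x z‖ ^ 2 ≤
      vnormA A x ^ 2 *
        (max (vnormA A y ^ 2) (vnormA A z ^ 2) + ‖innA A y z‖) := by
  simp only [sq_vnormA hA]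
  exact stmt6_general (isPosSemidef_innerₛₗ_comp hA.toLinearMap) x y z
end
end

section
/- Let T and S be bounded linear operators on H, each admitting an A-adjoint and each A-selfadjoint. Then ω_A(T+S) ≤ sqrt( ω_A(T + iS)² + ω_A(ST) + ‖T‖_A · ‖S‖_A ) ≤ ω_A(T) + ω_A(S). -/
noncomputable section

open ContinuousLinearMap

variable {H : Type*} [NormedAddCommGroup H] [InnerProductSpace ℂ H] [CompleteSpace H]

/-!
For the semi-inner product `⟨A x, y⟩`, an `A`-selfadjoint operator is a symmetric operator, and
it is automatically bounded (Krein): Cauchy-Schwarz gives `‖T x‖² ≤ ‖T² x‖ ‖x‖`, hence by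
iteration `(‖T x‖ / ‖x‖) ^ 2ⁿ ≤ ‖T ^ 2ⁿ x‖ / ‖x‖`, whose right-hand side grows at most like the
`2ⁿ`-th power of the operator norm of `T` on the original space. It thus suffices to treat
bounded symmetric operators `T` and `S` on a semi-inner product space. For a unit vector `x` the
numbers `⟨T x, x⟩` and `⟨S x, x⟩` are real, so `|⟨(T + iS) x, x⟩|² = ⟨T x, x⟩² + ⟨S x, x⟩²`,
while Buzano's inequality `2 |⟨a, e⟩ ⟨e, b⟩| ≤ |⟨a, b⟩| + ‖a‖ ‖b‖` with `a = T x`, `b = S x`,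
`e = x` bounds the cross term `2 |⟨T x, x⟩ ⟨S x, x⟩|` by `ω(S T) + ‖T‖ ‖S‖`. The upper bound
then follows from `‖T‖ = ω(T)` for symmetric `T`.
-/

section NumericalRadius

variable {𝕜 E : Type*} [RCLike 𝕜] [SeminormedAddCommGroup E] [InnerProductSpace 𝕜 E]

theorem two_mul_norm_inner_mul_inner_le {e : E} (he : ‖e‖ = 1) (a b : E) :
    2 * ‖inner 𝕜 a e * inner 𝕜 e b‖ ≤ ‖inner 𝕜 a b‖ + ‖a‖ * ‖b‖ := by
  -- Reflecting `b` in the line spanned by `e` preserves its norm.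
  set r : E := (2 * inner 𝕜 e b) • e - b with hr
  have hr_norm : ‖r‖ = ‖b‖ := by
    have hre : RCLike.re (inner 𝕜 ((2 * inner 𝕜 e b) • e) b) = 2 * ‖inner 𝕜 e b‖ ^ 2 := by
      rw [inner_smul_left, map_mul (starRingEnd 𝕜), mul_assoc, RCLike.conj_mul, map_ofNat]
      norm_cast
    rw [← sq_eq_sq₀ (norm_nonneg _) (norm_nonneg _), hr, @norm_sub_sq 𝕜, hre, norm_smul, he,
      norm_mul, RCLike.norm_ofNat]
    ring
  have hinner : 2 * (inner 𝕜 a e * inner 𝕜 e b) = inner 𝕜 a b + inner 𝕜 a r := by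
    rw [hr, inner_sub_right, inner_smul_right]
    ring
  calc 2 * ‖inner 𝕜 a e * inner 𝕜 e b‖ = ‖inner 𝕜 a b + inner 𝕜 a r‖ := by
        rw [← hinner, norm_mul (2 : 𝕜), RCLike.norm_ofNat]
    _ ≤ ‖inner 𝕜 a b‖ + ‖inner 𝕜 a r‖ := norm_add_le _ _
    _ ≤ ‖inner 𝕜 a b‖ + ‖a‖ * ‖b‖ := by
        gcongr
        exact hr_norm ▸ norm_inner_le_norm a r

/-- The numerical radius of a bounded operator on a semi-inner product space; it is `0` when the
space has no unit vector. -/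
def numericalRadius (T : E →L[𝕜] E) : ℝ :=
  sSup ((fun x ↦ ‖inner 𝕜 (T x) x‖) '' Metric.sphere 0 1)

theorem numericalRadius_nonneg (T : E →L[𝕜] E) : 0 ≤ numericalRadius T :=
  Real.sSup_nonneg (Set.forall_mem_image.2 fun _ _ ↦ norm_nonneg _)

theorem numericalRadius_le {T : E →L[𝕜] E} {c : ℝ} (hc : 0 ≤ c)
    (h : ∀ x, ‖x‖ = 1 → ‖inner 𝕜 (T x) x‖ ≤ c) : numericalRadius T ≤ c :=
  Real.sSup_le (Set.forall_mem_image.2 fun x hx ↦ h x (mem_sphere_zero_iff_norm.1 hx)) hc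

theorem norm_inner_apply_self_le_norm (T : E →L[𝕜] E) {x : E} (hx : ‖x‖ = 1) :
    ‖inner 𝕜 (T x) x‖ ≤ ‖T‖ := by
  simpa only [hx, mul_one] using (norm_inner_le_norm (T x) x).trans
    (mul_le_mul_of_nonneg_right (T.le_opNorm x) (norm_nonneg x))

theorem numericalRadius_le_norm (T : E →L[𝕜] E) : numericalRadius T ≤ ‖T‖ :=
  numericalRadius_le (norm_nonneg T) fun _ ↦ norm_inner_apply_self_le_norm T

theorem norm_inner_apply_self_le_numericalRadius (T : E →L[𝕜] E) {x : E} (hx : ‖x‖ = 1) :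
    ‖inner 𝕜 (T x) x‖ ≤ numericalRadius T :=
  le_csSup ⟨‖T‖, Set.forall_mem_image.2 fun _ hy ↦
      norm_inner_apply_self_le_norm T (mem_sphere_zero_iff_norm.1 hy)⟩
    (Set.mem_image_of_mem _ (mem_sphere_zero_iff_norm.2 hx))

theorem norm_inner_apply_self_le_numericalRadius_mul_sq (T : E →L[𝕜] E) (x : E) :
    ‖inner 𝕜 (T x) x‖ ≤ numericalRadius T * ‖x‖ ^ 2 := by
  rcases (norm_nonneg x).eq_or_lt with hx | hx
  · simpa [← hx] using norm_inner_le_norm (𝕜 := 𝕜) (T x) x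
  · have hunit : ‖((‖x‖⁻¹ : ℝ) : 𝕜) • x‖ = 1 := by simp [norm_smul, hx.ne']
    have h := norm_inner_apply_self_le_numericalRadius T hunit
    simp only [map_smul, inner_smul_left, inner_smul_right, RCLike.conj_ofReal, norm_mul,
      RCLike.norm_ofReal, abs_inv, abs_norm] at h
    rw [← mul_assoc, ← mul_inv, inv_mul_le_iff₀ (by positivity)] at h
    linarith

theorem four_mul_re_inner_apply_eq {T : E →ₗ[𝕜] E} (hT : T.IsSymmetric) (x y : E) :
    4 * RCLike.re (inner 𝕜 (T x) y) =
      RCLike.re (inner 𝕜 (T (x + y)) (x + y)) - RCLike.re (inner 𝕜 (T (x - y)) (x - y)) := by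
  have hswap : RCLike.re (inner 𝕜 (T y) x) = RCLike.re (inner 𝕜 (T x) y) := by
    rw [hT, inner_re_symm]
  simp only [map_add, map_sub, inner_add_left, inner_add_right, inner_sub_left, inner_sub_right,
    hswap]
  ring

theorem re_inner_apply_le_numericalRadius {T : E →L[𝕜] E} (hT : T.IsSymmetric) {x y : E}
    (hx : ‖x‖ = 1) (hy : ‖y‖ = 1) : RCLike.re (inner 𝕜 (T x) y) ≤ numericalRadius T := by
  have hquad (z : E) : |RCLike.re (inner 𝕜 (T z) z)| ≤ numericalRadius T * ‖z‖ ^ 2 :=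
    (RCLike.abs_re_le_norm _).trans (norm_inner_apply_self_le_numericalRadius_mul_sq T z)
  suffices 4 * RCLike.re (inner 𝕜 (T x) y) ≤ 4 * numericalRadius T by linarith
  calc 4 * RCLike.re (inner 𝕜 (T x) y)
      = RCLike.re (inner 𝕜 (T (x + y)) (x + y)) - RCLike.re (inner 𝕜 (T (x - y)) (x - y)) :=
        four_mul_re_inner_apply_eq hT x y
    _ ≤ numericalRadius T * ‖x + y‖ ^ 2 + numericalRadius T * ‖x - y‖ ^ 2 := by
        linarith [(abs_le.1 (hquad (x + y))).2, (abs_le.1 (hquad (x - y))).1]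
    _ = 4 * numericalRadius T := by
        have hpar := parallelogram_law_with_norm 𝕜 x y
        rw [hx, hy] at hpar
        linear_combination numericalRadius T * hpar

theorem norm_eq_numericalRadius {T : E →L[𝕜] E} (hT : T.IsSymmetric) :
    ‖T‖ = numericalRadius T := by
  refine le_antisymm ?_ (numericalRadius_le_norm T)
  refine opNorm_le_of_unit_norm (𝕜 := 𝕜) (numericalRadius_nonneg T) fun x hx ↦ ?_
  rcases (norm_nonneg (T x)).eq_or_lt with hTx | hTx
  · exact hTx ▸ numericalRadius_nonneg T
  · have hunit : ‖((‖T x‖⁻¹ : ℝ) : 𝕜) • T x‖ = 1 := by simp [norm_smul, hTx.ne']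
    calc ‖T x‖ = RCLike.re (inner 𝕜 (T x) (((‖T x‖⁻¹ : ℝ) : 𝕜) • T x)) := by
          rw [inner_smul_right, RCLike.re_ofReal_mul, ← norm_sq_eq_re_inner]
          field_simp
      _ ≤ numericalRadius T := re_inner_apply_le_numericalRadius hT hx hunit

end NumericalRadius

section CartesianDecomposition

variable {E : Type*} [SeminormedAddCommGroup E] [InnerProductSpace ℂ E] {T S : E →L[ℂ] E}

theorem norm_inner_add_I_smul_apply_sq (hT : T.IsSymmetric) (hS : S.IsSymmetric) (x : E) :
    ‖inner ℂ ((T + Complex.I • S) x) x‖ ^ 2 = ‖inner ℂ (T x) x‖ ^ 2 + ‖inner ℂ (S x) x‖ ^ 2 := by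
  have hTim : (inner ℂ (T x) x).im = 0 := hT.im_inner_apply_self x
  have hSim : (inner ℂ (S x) x).im = 0 := hS.im_inner_apply_self x
  simp [inner_add_left, inner_smul_left, Complex.sq_norm, Complex.normSq_apply, hTim, hSim]

theorem numericalRadius_add_I_smul_sq_le (hT : T.IsSymmetric) (hS : S.IsSymmetric) :
    numericalRadius (T + Complex.I • S) ^ 2 ≤ numericalRadius T ^ 2 + numericalRadius S ^ 2 := by
  rw [← Real.le_sqrt (numericalRadius_nonneg _) (by positivity)]
  refine numericalRadius_le (Real.sqrt_nonneg _) fun x hx ↦ Real.le_sqrt_of_sq_le ?_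
  rw [norm_inner_add_I_smul_apply_sq hT hS]
  gcongr <;> exact norm_inner_apply_self_le_numericalRadius _ hx

theorem two_mul_norm_inner_apply_self_mul_le (T : E →L[ℂ] E) (hS : S.IsSymmetric) {x : E}
    (hx : ‖x‖ = 1) :
    2 * (‖inner ℂ (T x) x‖ * ‖inner ℂ (S x) x‖) ≤ numericalRadius (S * T) + ‖T‖ * ‖S‖ :=
  calc 2 * (‖inner ℂ (T x) x‖ * ‖inner ℂ (S x) x‖)
      = 2 * ‖inner ℂ (T x) x * inner ℂ x (S x)‖ := by rw [norm_mul, norm_inner_symm x]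
    _ ≤ ‖inner ℂ (T x) (S x)‖ + ‖T x‖ * ‖S x‖ := two_mul_norm_inner_mul_inner_le hx _ _
    _ = ‖inner ℂ ((S * T) x) x‖ + ‖T x‖ * ‖S x‖ := by
        rw [← hS.apply_clm, mul_apply_eq_comp]
    _ ≤ numericalRadius (S * T) + ‖T‖ * ‖S‖ := by
        gcongr
        · exact norm_inner_apply_self_le_numericalRadius _ hx
        · exact T.unit_le_opNorm x hx.le
        · exact S.unit_le_opNorm x hx.le

theorem numericalRadius_add_le_sqrt (hT : T.IsSymmetric) (hS : S.IsSymmetric) :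
    numericalRadius (T + S) ≤
      √(numericalRadius (T + Complex.I • S) ^ 2 + numericalRadius (S * T) + ‖T‖ * ‖S‖) := by
  refine numericalRadius_le (Real.sqrt_nonneg _) fun x hx ↦ Real.le_sqrt_of_sq_le ?_
  have hcart : ‖inner ℂ (T x) x‖ ^ 2 + ‖inner ℂ (S x) x‖ ^ 2 ≤
      numericalRadius (T + Complex.I • S) ^ 2 := by
    rw [← norm_inner_add_I_smul_apply_sq hT hS]
    gcongr
    exact norm_inner_apply_self_le_numericalRadius _ hx
  calc ‖inner ℂ ((T + S) x) x‖ ^ 2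
      ≤ (‖inner ℂ (T x) x‖ + ‖inner ℂ (S x) x‖) ^ 2 := by
        rw [add_apply, inner_add_left]
        gcongr
        exact norm_add_le _ _
    _ ≤ numericalRadius (T + Complex.I • S) ^ 2 + numericalRadius (S * T) + ‖T‖ * ‖S‖ := by
        linarith [two_mul_norm_inner_apply_self_mul_le T hS hx,
          add_sq ‖inner ℂ (T x) x‖ ‖inner ℂ (S x) x‖]

theorem sqrt_le_numericalRadius_add (hT : T.IsSymmetric) (hS : S.IsSymmetric) :
    √(numericalRadius (T + Complex.I • S) ^ 2 + numericalRadius (S * T) + ‖T‖ * ‖S‖) ≤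
      numericalRadius T + numericalRadius S := by
  refine Real.sqrt_le_iff.2 ⟨add_nonneg (numericalRadius_nonneg T) (numericalRadius_nonneg S), ?_⟩
  have hmul : numericalRadius (S * T) ≤ numericalRadius S * numericalRadius T := by
    rw [← norm_eq_numericalRadius hS, ← norm_eq_numericalRadius hT]
    exact (numericalRadius_le_norm _).trans (norm_mul_le S T)
  rw [norm_eq_numericalRadius hT, norm_eq_numericalRadius hS]
  linarith [numericalRadius_add_I_smul_sq_le hT hS, add_sq (numericalRadius T) (numericalRadius S)]

end CartesianDecomposition

section Krein

theorem le_of_forall_pow_two_pow_le {a b C : ℝ} (hb : 0 ≤ b)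
    (h : ∀ n : ℕ, a ^ 2 ^ n ≤ C * b ^ 2 ^ n) : a ≤ b := by
  by_contra! hlt
  have ha : 0 < a := hb.trans_lt hlt
  have hlim : Filter.Tendsto (fun n : ℕ ↦ C * (b / a) ^ 2 ^ n) Filter.atTop (nhds (C * 0)) :=
    ((tendsto_pow_atTop_nhds_zero_of_lt_one (by positivity) ((div_lt_one ha).2 hlt)).comp
      (tendsto_pow_atTop_atTop_of_one_lt one_lt_two)).const_mul C
  have hone : 1 ≤ C * 0 := ge_of_tendsto' hlim fun n ↦ by
    rw [div_pow, ← mul_div_assoc, one_le_div (by positivity)]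
    exact h n
  norm_num at hone

variable {𝕜 E : Type*} [RCLike 𝕜] [SeminormedAddCommGroup E] [InnerProductSpace 𝕜 E]
  {T : E →ₗ[𝕜] E}

theorem norm_apply_sq_le (hT : T.IsSymmetric) (x : E) : ‖T x‖ ^ 2 ≤ ‖T (T x)‖ * ‖x‖ :=
  calc ‖T x‖ ^ 2 = RCLike.re (inner 𝕜 (T (T x)) x) := by rw [hT, norm_sq_eq_re_inner (𝕜 := 𝕜)]
    _ ≤ ‖T (T x)‖ * ‖x‖ := (RCLike.re_le_norm _).trans (norm_inner_le_norm _ _)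

theorem div_norm_pow_two_pow_le (hT : T.IsSymmetric) (x : E) (n : ℕ) :
    (‖T x‖ / ‖x‖) ^ 2 ^ n ≤ ‖(T ^ 2 ^ n) x‖ / ‖x‖ := by
  induction n with
  | zero => simp
  | succ n ih =>
    calc (‖T x‖ / ‖x‖) ^ 2 ^ (n + 1) = ((‖T x‖ / ‖x‖) ^ 2 ^ n) ^ 2 := by rw [pow_succ, pow_mul]
      _ ≤ (‖(T ^ 2 ^ n) x‖ / ‖x‖) ^ 2 := by gcongr
      _ ≤ ‖(T ^ 2 ^ n) ((T ^ 2 ^ n) x)‖ * ‖x‖ / ‖x‖ ^ 2 := by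
        rw [div_pow]
        gcongr
        exact norm_apply_sq_le (hT.pow _) x
      _ = ‖(T ^ 2 ^ (n + 1)) x‖ / ‖x‖ := by
        rw [pow_succ 2 n, mul_two, pow_add, Module.End.mul_apply, sq ‖x‖, mul_div_assoc,
          div_self_mul_self', ← div_eq_mul_inv]

theorem norm_apply_le_of_norm_pow_apply_le (hT : T.IsSymmetric) {x : E} {C r : ℝ} (hr : 0 ≤ r)
    (h : ∀ n : ℕ, 0 < n → ‖(T ^ n) x‖ ≤ C * r ^ n) : ‖T x‖ ≤ r * ‖x‖ := by
  rcases (norm_nonneg x).eq_or_lt with hx | hx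
  · have hzero : ‖T x‖ ^ 2 ≤ 0 := by simpa [← hx] using norm_apply_sq_le hT x
    simp [← hx, pow_eq_zero_iff two_ne_zero |>.1 (hzero.antisymm (sq_nonneg _))]
  · rw [← div_le_iff₀ hx]
    refine le_of_forall_pow_two_pow_le (C := C / ‖x‖) hr fun n ↦ ?_
    refine (div_norm_pow_two_pow_le hT x n).trans ?_
    rw [div_mul_eq_mul_div]
    gcongr
    exact h _ (by positivity)

end Krein

/-- The space `V` endowed with the semi-inner product `⟨A x, y⟩` of a positive operator `A`. It is
a type synonym, so that the original norm of `V` is not overridden. -/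
def SemiHilbert {𝕜 V : Type*} [RCLike 𝕜] [NormedAddCommGroup V] [InnerProductSpace 𝕜 V]
    {A : V →L[𝕜] V} (_hA : A.IsPositive) : Type _ := V

namespace SemiHilbert

variable {𝕜 V : Type*} [RCLike 𝕜] [NormedAddCommGroup V] [InnerProductSpace 𝕜 V]
  {A : V →L[𝕜] V} (hA : A.IsPositive)

instance : AddCommGroup (SemiHilbert hA) := inferInstanceAs (AddCommGroup V)

instance : Module 𝕜 (SemiHilbert hA) := inferInstanceAs (Module 𝕜 V)

/-- The identity map from `V` to its semi-Hilbert space. -/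
def of : V ≃ₗ[𝕜] SemiHilbert hA := LinearEquiv.refl 𝕜 V

/-- The semi-inner product `⟨A x, y⟩`. -/
abbrev core : PreInnerProductSpace.Core 𝕜 (SemiHilbert hA) where
  inner x y := inner 𝕜 (A ((of hA).symm x)) ((of hA).symm y)
  conj_inner_symm x y := by rw [inner_conj_symm]; exact (hA.inner_left_eq_inner_right _ _).symm
  re_inner_nonneg _ := hA.re_inner_nonneg_left _
  add_left x y z := by simp only [map_add, inner_add_left]
  smul_left x y r := by simp only [map_smul, inner_smul_left]

instance : SeminormedAddCommGroup (SemiHilbert hA) :=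
  InnerProductSpace.Core.toSeminormedAddCommGroup (c := core hA)

instance : InnerProductSpace 𝕜 (SemiHilbert hA) := InnerProductSpace.ofCore (core hA)

theorem inner_of (x y : V) : inner 𝕜 (of hA x) (of hA y) = inner 𝕜 (A x) y := rfl

theorem norm_of (x : V) : ‖of hA x‖ = √(RCLike.re (inner 𝕜 (A x) x)) := rfl

theorem norm_of_le (x : V) : ‖of hA x‖ ≤ √‖A‖ * ‖x‖ := by
  rw [norm_of, Real.sqrt_le_left (by positivity), mul_pow, Real.sq_sqrt (norm_nonneg A)]
  calc RCLike.re (inner 𝕜 (A x) x) ≤ ‖A x‖ * ‖x‖ := re_inner_le_norm _ _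
    _ ≤ ‖A‖ * ‖x‖ * ‖x‖ := by gcongr; exact A.le_opNorm x
    _ = ‖A‖ * ‖x‖ ^ 2 := by ring

theorem isSymmetric_conj {T : V →L[𝕜] V} (hT : (A * T).IsSymmetric) :
    ((of hA).conj (T : V →ₗ[𝕜] V)).IsSymmetric := fun _ _ ↦
  (hT _ _).trans (hA.inner_left_eq_inner_right _ _).symm

theorem norm_conj_apply_le {T : V →L[𝕜] V} (hT : (A * T).IsSymmetric) (x : SemiHilbert hA) :
    ‖(of hA).conj (T : V →ₗ[𝕜] V) x‖ ≤ ‖T‖ * ‖x‖ := by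
  refine norm_apply_le_of_norm_pow_apply_le (isSymmetric_conj hA hT) (norm_nonneg T)
    (C := √‖A‖ * ‖(of hA).symm x‖) fun n hn ↦ ?_
  have hpow (m : ℕ) :
      ((of hA).conj (T : V →ₗ[𝕜] V) ^ m) x = of hA ((T ^ m) ((of hA).symm x)) := by
    induction m with
    | zero => rfl
    | succ m ih => rw [pow_succ', Module.End.mul_apply, ih, pow_succ']; rfl
  calc ‖((of hA).conj (T : V →ₗ[𝕜] V) ^ n) x‖ ≤ √‖A‖ * ‖(T ^ n) ((of hA).symm x)‖ :=
        hpow n ▸ norm_of_le hA _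
    _ ≤ √‖A‖ * (‖T‖ ^ n * ‖(of hA).symm x‖) := by
        gcongr
        exact (T ^ n).le_of_opNorm_le (norm_pow_le' T hn) _
    _ = √‖A‖ * ‖(of hA).symm x‖ * ‖T‖ ^ n := by ring

theorem exists_isSymmetric_semiconj {T : V →L[𝕜] V} (hT : (A * T).IsSymmetric) :
    ∃ T' : SemiHilbert hA →L[𝕜] SemiHilbert hA,
      T'.IsSymmetric ∧ Function.Semiconj (of hA) T T' :=
  ⟨((of hA).conj (T : V →ₗ[𝕜] V)).mkContinuous ‖T‖ (norm_conj_apply_le hA hT),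
    isSymmetric_conj hA hT, fun _ ↦ rfl⟩

end SemiHilbert

section Transfer

variable {V : Type*} [NormedAddCommGroup V] [InnerProductSpace ℂ V] {A T : V →L[ℂ] V}
  (hA : A.IsPositive) {T' : SemiHilbert hA →L[ℂ] SemiHilbert hA}

theorem vnormA_eq_norm_of (x : V) : vnormA A x = ‖SemiHilbert.of hA x‖ := rfl

theorem wA_eq_numericalRadius (hT : Function.Semiconj (SemiHilbert.of hA) T T') :
    wA A T = numericalRadius T' := by
  have hinner (x : V) : ‖innA A (T x) x‖ =
      ‖inner ℂ (T' (SemiHilbert.of hA x)) (SemiHilbert.of hA x)‖ := by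
    rw [← hT x, SemiHilbert.inner_of, innA]
  refine congrArg sSup (Set.ext fun c ↦ ⟨?_, ?_⟩)
  · rintro ⟨x, hx, rfl⟩
    exact ⟨SemiHilbert.of hA x, mem_sphere_zero_iff_norm.2 hx, (hinner x).symm⟩
  · rintro ⟨x, hx, rfl⟩
    exact ⟨(SemiHilbert.of hA).symm x, mem_sphere_zero_iff_norm.1 hx, (hinner _).symm⟩

theorem opNormA_eq_norm (hT : Function.Semiconj (SemiHilbert.of hA) T T') :
    opNormA A T = ‖T'‖ := by
  have hle {x : V} (hx : vnormA A x = 1) : vnormA A (T x) ≤ ‖T'‖ := by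
    rw [vnormA_eq_norm_of hA, hT]
    exact T'.unit_le_opNorm (SemiHilbert.of hA x) hx.le
  refine le_antisymm (Real.sSup_le ?_ T'.opNorm_nonneg) ?_
  · rintro _ ⟨x, hx, rfl⟩
    exact hle hx
  · refine opNorm_le_of_unit_norm (𝕜 := ℂ) (Real.sSup_nonneg ?_) fun x hx ↦ le_csSup ⟨‖T'‖, ?_⟩
      ⟨(SemiHilbert.of hA).symm x, hx, ?_⟩
    · rintro _ ⟨x, -, rfl⟩
      exact Real.sqrt_nonneg _
    · rintro _ ⟨x, hx, rfl⟩
      exact hle hx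
    · rw [vnormA_eq_norm_of hA, hT, LinearEquiv.apply_symm_apply]

end Transfer

theorem stmt11 (A : H →L[ℂ] H) (hA : A.IsPositive) (hA0 : A ≠ 0)
    (T S : H →L[ℂ] H) (hT : HasAAdjoint A T) (hS : HasAAdjoint A S)
    (hTsa : IsSelfAdjoint (A * T)) (hSsa : IsSelfAdjoint (A * S)) :
    wA A (T + S) ≤
        Real.sqrt (wA A (T + Complex.I • S) ^ 2 + wA A (S * T) +
          opNormA A T * opNormA A S) ∧
      Real.sqrt (wA A (T + Complex.I • S) ^ 2 + wA A (S * T) +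
          opNormA A T * opNormA A S) ≤
        wA A T + wA A S := by
  obtain ⟨T', hT', hTT'⟩ := SemiHilbert.exists_isSymmetric_semiconj hA hTsa.isSymmetric
  obtain ⟨S', hS', hSS'⟩ := SemiHilbert.exists_isSymmetric_semiconj hA hSsa.isSymmetric
  have hadd : wA A (T + S) = numericalRadius (T' + S') :=
    wA_eq_numericalRadius hA fun x ↦ by simp [hTT' x, hSS' x]
  have hadd_I : wA A (T + Complex.I • S) = numericalRadius (T' + Complex.I • S') :=
    wA_eq_numericalRadius hA fun x ↦ by simp [hTT' x, hSS' x]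
  have hmul : wA A (S * T) = numericalRadius (S' * T') :=
    wA_eq_numericalRadius hA (hSS'.comp_right hTT')
  rw [hadd, hadd_I, hmul, wA_eq_numericalRadius hA hTT', wA_eq_numericalRadius hA hSS',
    opNormA_eq_norm hA hTT', opNormA_eq_norm hA hSS']
  exact ⟨numericalRadius_add_le_sqrt hT' hS', sqrt_le_numericalRadius_add hT' hS'⟩
end
end
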